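/- For any ordered logic program (Π,<), the operator A_{(Π,<)} = C_{(Π,<)}∘C_{(Π,<)} is monotonic: for all sets of literals X₁, X₂, if X₁ ⊆ X₂ then A_{(Π,<)}(X₁) ⊆ A_{(Π,<)}(X₂); consequently A_{(Π,<)} possesses a least fixpoint and a greatest fixpoint. -/

import Mathlib

open scoped Classical

/-- A literal: an atom `A` or its classical negation `¬A`. -/
inductive Lit (α : Type) : Type
  | pos : α → Lit α
  | neg : α → Lit α

/-- A rule with a head literal and finite positive and negative bodies. -/
structure Rule (α : Type) where
  head : Lit α
  pbody : Finset (Lit α)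
  nbody : Finset (Lit α)

/-- A program is a set of rules (finiteness is stated as a hypothesis). -/
abbrev Program (α : Type) := Set (Rule α)

/-- `X` is consistent if it contains no complementary pair. -/
def Consistent {α : Type} (X : Set (Lit α)) : Prop :=
  ¬ ∃ A : α, Lit.pos A ∈ X ∧ Lit.neg A ∈ X

/-- `X` is logically closed if it is consistent or equals the set of all literals. -/
def LogClosed {α : Type} (X : Set (Lit α)) : Prop :=
  Consistent X ∨ X = Set.univ

/-- `X` is closed under (basic) program `P`. -/
def ClosedUnder {α : Type} (P : Program α) (X : Set (Lit α)) : Prop :=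
  ∀ r ∈ P, ↑r.pbody ⊆ X → r.head ∈ X

/-- `Cn P` : the smallest logically closed set closed under basic program `P`. -/
def Cn {α : Type} (P : Program α) : Set (Lit α) :=
  ⋂₀ {X | LogClosed X ∧ ClosedUnder P X}

/-- The reduct of `P` relative to `X`. -/
def reduct {α : Type} (P : Program α) (X : Set (Lit α)) : Program α :=
  {s | ∃ r ∈ P, (↑r.nbody ∩ X = (∅ : Set (Lit α))) ∧ s = ⟨r.head, r.pbody, ∅⟩}

/-- A program is basic if all its rules have empty negative body. -/
def IsBasic {α : Type} (P : Program α) : Prop := ∀ r ∈ P, r.nbody = ∅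

/-- `C_Π(X) = Cn(Π^X)`. -/
noncomputable def Cop {α : Type} (P : Program α) (X : Set (Lit α)) : Set (Lit α) :=
  Cn (reduct P X)

/-- `A_Π(X) = C_Π(C_Π(X))`. -/
noncomputable def Aop {α : Type} (P : Program α) (X : Set (Lit α)) : Set (Lit α) :=
  Cop P (Cop P X)

/-- `X` is an answer set of `P` iff `Cn(P^X) = X`. -/
def AnswerSet {α : Type} (P : Program α) (X : Set (Lit α)) : Prop :=
  Cn (reduct P X) = X

/-- Immediate consequence operator for a basic program. -/
noncomputable def T {α : Type} (P : Program α) (X : Set (Lit α)) : Set (Lit α) :=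
  if Consistent X then {L | ∃ r ∈ P, ↑r.pbody ⊆ X ∧ L = r.head} else Set.univ

/-- `r` is active wrt `(X, Y)`. -/
def Active {α : Type} (r : Rule α) (X Y : Set (Lit α)) : Prop :=
  ↑r.pbody ⊆ X ∧ ↑r.nbody ∩ Y = (∅ : Set (Lit α))

/-- Extended immediate consequence operator `T_{Π,Y}(X)`. -/
noncomputable def TE {α : Type} (P : Program α) (Y X : Set (Lit α)) : Set (Lit α) :=
  if Consistent X then {L | ∃ r ∈ P, Active r X Y ∧ L = r.head} else Set.univ

/-- Preference-sensitive operator `T_{(Π,<),Y}(X)` (Definition 1). -/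
noncomputable def TP {α : Type} (P : Program α) (lt : Rule α → Rule α → Prop)
    (Y X : Set (Lit α)) : Set (Lit α) :=
  if Consistent X then
    {L | ∃ r ∈ P, Active r X Y ∧
      (¬ ∃ r' ∈ P, lt r r' ∧ Active r' Y X ∧ r'.head ∉ X) ∧ L = r.head}
  else Set.univ

/-- `C_{(Π,<)}(X)` (Definition 2). -/
noncomputable def CP {α : Type} (P : Program α) (lt : Rule α → Rule α → Prop)
    (X : Set (Lit α)) : Set (Lit α) :=
  ⋃ i : ℕ, (TP P lt X)^[i] ∅

/-- `A_{(Π,<)}(X) = C_{(Π,<)}(C_{(Π,<)}(X))`. -/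
noncomputable def AP {α : Type} (P : Program α) (lt : Rule α → Rule α → Prop)
    (X : Set (Lit α)) : Set (Lit α) :=
  CP P lt (CP P lt X)

/-- The set `D^r_{(X,Y)}` of removable literals. -/
def D {α : Type} (P : Program α) (lt : Rule α → Rule α → Prop) (r : Rule α)
    (X Y : Set (Lit α)) : Set (Lit α) :=
  {L | ∀ r' ∈ P, r'.head = L → ↑r'.pbody ⊆ Y →
      lt r' r ∧ ({r.head} ∪ X) ∩ ↑r'.nbody ≠ (∅ : Set (Lit α))}

/-- `T°_{(Π,<),Y}(X)` (Definition 3). -/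
noncomputable def TN {α : Type} (P : Program α) (lt : Rule α → Rule α → Prop)
    (Y X : Set (Lit α)) : Set (Lit α) :=
  if Consistent X then
    {L | ∃ r ∈ P, Active r X (Y \ D P lt r X Y) ∧ L = r.head}
  else Set.univ

/-- `C°_{(Π,<)}(X)` (Definition 4). -/
noncomputable def CN {α : Type} (P : Program α) (lt : Rule α → Rule α → Prop)
    (X : Set (Lit α)) : Set (Lit α) :=
  ⋃ i : ℕ, (TN P lt X)^[i] ∅

/-- `A°_{(Π,<)}(X) = C°_{(Π,<)}(C_Π(X))`. -/
noncomputable def AN {α : Type} (P : Program α) (lt : Rule α → Rule α → Prop)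
    (X : Set (Lit α)) : Set (Lit α) :=
  CN P lt (Cop P X)

/-! A blocker of a rule must be active with respect to `(Y, X)`, the reverse of the pair required
for the rule itself, and must have its head outside `X`. Enlarging `X` or shrinking `Y` thus enables
rules and disables blockers at the same time, so `T_{(Π,<),Y}(X)` is monotone in `X` and antitone in
`Y`. Iterating from `∅` makes `C_{(Π,<)}` antitone; the square of an antitone operator is monotone,
and Knaster–Tarski applies to the complete lattice of sets of literals. -/

section

variable {α : Type} {X X' Y Y' : Set (Lit α)}

theorem Consistent.subset (hX' : Consistent X') (hX : X ⊆ X') : Consistent X :=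
  fun ⟨A, hpos, hneg⟩ => hX' ⟨A, hX hpos, hX hneg⟩

theorem Active.mono {r : Rule α} (hr : Active r X Y) (hX : X ⊆ X') (hY : Y' ⊆ Y) :
    Active r X' Y' :=
  ⟨hr.1.trans hX, Set.subset_eq_empty (Set.inter_subset_inter_right _ hY) hr.2⟩

variable (P : Program α) (lt : Rule α → Rule α → Prop)

theorem TP_subset_TP (hX : X ⊆ X') (hY : Y' ⊆ Y) : TP P lt Y X ⊆ TP P lt Y' X' := by
  by_cases hX' : Consistent X'
  · rw [TP, TP, if_pos (hX'.subset hX), if_pos hX']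
    rintro _ ⟨r, hrP, hr, hunblocked, rfl⟩
    refine ⟨r, hrP, hr.mono hX hY, ?_, rfl⟩
    rintro ⟨r', hr'P, hlt, hr', hhead⟩
    exact hunblocked ⟨r', hr'P, hlt, hr'.mono hY hX, fun hmem => hhead (hX hmem)⟩
  · rw [TP.eq_def P lt Y' X', if_neg hX']
    exact Set.subset_univ _

theorem TP_monotone (Y : Set (Lit α)) : Monotone (TP P lt Y) :=
  fun _ _ hX => TP_subset_TP P lt hX subset_rfl

theorem TP_antitone : Antitone (TP P lt) :=
  fun _ _ hY _ => TP_subset_TP P lt subset_rfl hY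

theorem CP_antitone : Antitone (CP P lt) :=
  fun _ _ hY => Set.iUnion_mono fun i =>
    (TP_monotone P lt _).iterate_le_of_le (TP_antitone P lt hY) i ∅

theorem AP_monotone : Monotone (AP P lt) :=
  (CP_antitone P lt).comp (CP_antitone P lt)

theorem AP_monotone_lfp_gfp_general :
    Monotone (AP P lt) ∧
    (∃ L, IsLeast (Function.fixedPoints (AP P lt)) L) ∧
    (∃ G, IsGreatest (Function.fixedPoints (AP P lt)) G) :=
  let f : Set (Lit α) →o Set (Lit α) := ⟨AP P lt, AP_monotone P lt⟩
  ⟨f.monotone, ⟨f.lfp, f.isLeast_lfp⟩, ⟨f.gfp, f.isGreatest_gfp⟩⟩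

end

/-- `A_{(Π,<)} = C_{(Π,<)} ∘ C_{(Π,<)}` is monotonic, hence has a
least and a greatest fixpoint. -/
theorem AP_monotone_lfp_gfp {α : Type} (P : Program α) (hfin : P.Finite)
    (lt : Rule α → Rule α → Prop)
    (hirr : ∀ r, ¬ lt r r) (htrans : ∀ r₁ r₂ r₃, lt r₁ r₂ → lt r₂ r₃ → lt r₁ r₃) :
    (∀ X₁ X₂ : Set (Lit α), X₁ ⊆ X₂ → AP P lt X₁ ⊆ AP P lt X₂) ∧
    (∃ L : Set (Lit α), AP P lt L = L ∧ ∀ Z, AP P lt Z = Z → L ⊆ Z) ∧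
    (∃ G : Set (Lit α), AP P lt G = G ∧ ∀ Z, AP P lt Z = Z → Z ⊆ G) :=
  AP_monotone_lfp_gfp_general P lt
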